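/- For every real number q with 0 < q < 1, the function q ↦ −(1 + k(q)^2)/k(q) is differentiable at q with derivative equal to E(q^2)^3 E(q^5)^8 / (q^2 · E(q^{10})^7). -/

import Mathlib

open Real

/-- Euler's product `E(q) = ∏_{j=1}^∞ (1 - q^j)`. -/
noncomputable def eulerE (q : ℝ) : ℝ := ∏' j : ℕ, (1 - q ^ (j + 1))

/-- Ramanujan's level-10 function `k(q)`. -/
noncomputable def ramK (q : ℝ) : ℝ :=
  q * ∏' j : ℕ,
    ((1 - q ^ (10 * j + 1)) * (1 - q ^ (10 * j + 2)) * (1 - q ^ (10 * j + 8)) *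
        (1 - q ^ (10 * j + 9))) /
      ((1 - q ^ (10 * j + 3)) * (1 - q ^ (10 * j + 4)) * (1 - q ^ (10 * j + 6)) *
        (1 - q ^ (10 * j + 7)))

open Filter Topology

noncomputable def pA (q x : ℂ) : ℂ := ∏' j : ℕ, (1 - x * q ^ j)

lemma pA_summable {q : ℂ} (hq : ‖q‖ < 1) (x : ℂ) : Summable fun j : ℕ => ‖-(x * q ^ j)‖ := by
  simp only [norm_neg, norm_mul, norm_pow]
  exact (summable_geometric_of_lt_one (norm_nonneg _) hq).mul_left _

lemma pA_mult {q : ℂ} (hq : ‖q‖ < 1) (x : ℂ) : Multipliable fun j : ℕ => (1 - x * q ^ j) := by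
  simpa only [sub_eq_add_neg] using multipliable_one_add_of_summable (pA_summable hq x)

lemma pA_ne {q : ℂ} (hq : ‖q‖ < 1) {x : ℂ} (h : ∀ j : ℕ, x * q ^ j ≠ 1) : pA q x ≠ 0 := by
  unfold pA
  simp only [sub_eq_add_neg]
  apply tprod_one_add_ne_zero_of_summable _ (pA_summable hq x)
  intro i hi
  apply h i
  linear_combination -hi

lemma pA_ne' {q : ℂ} (hq : ‖q‖ < 1) {x : ℂ} (hx : ‖x‖ < 1) : pA q x ≠ 0 := by
  apply pA_ne hq
  intro j h
  have : ‖x * q ^ j‖ < 1 := by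
    rw [norm_mul, norm_pow]
    calc ‖x‖ * ‖q‖ ^ j ≤ ‖x‖ * 1 := by
          gcongr; exact pow_le_one₀ (norm_nonneg _) hq.le
      _ < 1 := by simpa using hx
  rw [h] at this
  simp at this

lemma pA_tendsto {q : ℂ} (hq : ‖q‖ < 1) (x : ℂ) :
    Tendsto (fun N => ∏ j ∈ Finset.range N, (1 - x * q ^ j)) atTop (𝓝 (pA q x)) :=
  (pA_mult hq x).hasProd.tendsto_prod_nat

lemma pA_rec {q : ℂ} (hq : ‖q‖ < 1) (x : ℂ) : pA q x = (1 - x) * pA q (q * x) := by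
  have h1 := (pA_tendsto hq x).comp (tendsto_add_atTop_nat 1)
  have h2 := (pA_tendsto hq (q * x)).const_mul (1 - x)
  refine tendsto_nhds_unique h1 (h2.congr fun N => ?_)
  simp only [Function.comp]
  rw [Finset.prod_range_succ', mul_comm]
  congr 1
  · apply Finset.prod_congr rfl; intro j _; ring
  · ring

lemma pA_cont {q : ℂ} (hq : ‖q‖ < 1) : Continuous (pA q) := by
  rw [continuous_iff_continuousAt]
  intro x
  unfold ContinuousAt pA
  simp only [sub_eq_add_neg]
  apply tendsto_tprod_one_add_of_dominated_convergence
    (bound := fun j => (‖x‖ + 1) * ‖q‖ ^ j)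
    ((summable_geometric_of_lt_one (norm_nonneg _) hq).mul_left _)
  · intro k
    exact Continuous.tendsto (by fun_prop) x
  · have : ∀ᶠ y in 𝓝 x, ‖y‖ < ‖x‖ + 1 := by
      apply (continuous_norm.tendsto x).eventually_lt_const; linarith
    filter_upwards [this] with y hy k
    rw [norm_neg, norm_mul, norm_pow]
    gcongr

lemma pA_split2 {q : ℂ} (hq : ‖q‖ < 1) (x : ℂ) : pA q x = pA (q ^ 2) x * pA (q ^ 2) (x * q) := by
  have hq2 : ‖q ^ 2‖ < 1 := by rw [norm_pow]; exact pow_lt_one₀ (norm_nonneg _) hq (by norm_num)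
  have h1 := (pA_tendsto hq x).comp (tendsto_id.const_mul_atTop' (show 0 < 2 by norm_num))
  have h2 := (pA_tendsto hq2 x).mul (pA_tendsto hq2 (x * q))
  refine tendsto_nhds_unique h1 (h2.congr fun N => ?_)
  simp only [Function.comp, id]
  induction N with
  | zero => simp
  | succ n ih =>
    rw [show 2 * (n + 1) = 2 * n + 1 + 1 by ring]
    simp only [Finset.prod_range_succ, ← ih, ← pow_mul]
    ring

lemma pA_split5 {q : ℂ} (hq : ‖q‖ < 1) (x : ℂ) : pA q x = pA (q ^ 5) x * pA (q ^ 5) (x * q)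
    * pA (q ^ 5) (x * q ^ 2) * pA (q ^ 5) (x * q ^ 3) * pA (q ^ 5) (x * q ^ 4) := by
  have hq2 : ‖q ^ 5‖ < 1 := by rw [norm_pow]; exact pow_lt_one₀ (norm_nonneg _) hq (by norm_num)
  have h1 := (pA_tendsto hq x).comp (tendsto_id.const_mul_atTop' (show 0 < 5 by norm_num))
  have h2 := ((((pA_tendsto hq2 x).mul (pA_tendsto hq2 (x * q))).mul (pA_tendsto hq2 (x * q^2))).mul
    (pA_tendsto hq2 (x * q^3))).mul (pA_tendsto hq2 (x * q^4))
  refine tendsto_nhds_unique h1 (h2.congr fun N => ?_)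
  simp only [Function.comp, id]
  induction N with
  | zero => simp
  | succ n ih =>
    rw [show 5 * (n + 1) = 5 * n + 1 + 1 + 1 + 1 + 1 by ring]
    simp only [Finset.prod_range_succ, ← ih, ← pow_mul]
    generalize ∏ j ∈ Finset.range n, (1 - x * q ^ (5 * j)) = a at *
    ring

/-- Gaussian binomial coefficients. -/
def gb (q : ℂ) : ℕ → ℕ → ℂ
  | _, 0 => 1
  | 0, (_ + 1) => 0
  | (M + 1), (k + 1) => gb q M (k + 1) + q ^ (M - k) * gb q M k

lemma gb_zero_right (q : ℂ) (M : ℕ) : gb q M 0 = 1 := by cases M <;> rfl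

lemma gb_eq_zero (q : ℂ) (M : ℕ) : ∀ k, M < k → gb q M k = 0 := by
  induction M with
  | zero => intro k hk; cases k with
    | zero => omega
    | succ k => rfl
  | succ M ih => intro k hk; cases k with
    | zero => omega
    | succ k => simp [gb, ih (k + 1) (by omega), ih k (by omega)]

lemma gb_binom (q z : ℂ) (M : ℕ) : ∏ j ∈ Finset.range M, (1 + z * q ^ j) =
    ∑ k ∈ Finset.range (M + 1), q ^ (k.choose 2) * gb q M k * z ^ k := by
  induction M with
  | zero => simp [gb]
  | succ M ih =>
    rw [Finset.prod_range_succ, ih, Finset.sum_range_succ' _ (M + 1)]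
    have h1 : ∑ k ∈ Finset.range (M + 1), q ^ ((k + 1).choose 2) * gb q (M + 1) (k + 1) * z ^ (k + 1)
      = ∑ k ∈ Finset.range (M + 1), q ^ ((k + 1).choose 2) * gb q M (k + 1) * z ^ (k + 1)
       + (∑ k ∈ Finset.range (M + 1), q ^ (k.choose 2) * gb q M k * z ^ k) * (z * q ^ M) := by
      rw [Finset.sum_mul, ← Finset.sum_add_distrib]
      apply Finset.sum_congr rfl
      intro k hk
      have hk' : k ≤ M := by simp at hk; omega
      have : q ^ M = q ^ k * q ^ (M - k) := by rw [← pow_add]; congr 1; omega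
      rw [gb, this, Nat.choose_succ_succ' k 1, Nat.choose_one_right, pow_add]
      ring
    have h2 := Finset.sum_range_succ' (fun k => q ^ (k.choose 2) * gb q M k * z ^ k) (M + 1)
    rw [Finset.sum_range_succ, gb_eq_zero q M (M + 1) (by omega)] at h2
    simp only [gb_zero_right] at h2 ⊢
    linear_combination h2 - h1

noncomputable def cP (q : ℂ) (n : ℕ) : ℂ := ∏ j ∈ Finset.range n, (1 - q * q ^ j)

lemma cP_succ (q : ℂ) (n : ℕ) : cP q (n + 1) = cP q n * (1 - q * q ^ n) := Finset.prod_range_succ _ _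

lemma gb_mul (q : ℂ) (M : ℕ) : ∀ k, k ≤ M → gb q M k * cP q k * cP q (M - k) = cP q M := by
  induction M with
  | zero => intro k hk; obtain rfl : k = 0 := by omega
            simp [gb, cP]
  | succ M ih =>
    intro k hk
    cases k with
    | zero => simp [gb, cP]
    | succ k =>
      have hk' : k ≤ M := by omega
      have e : M + 1 - (k + 1) = M - k := by omega
      have i1 := ih k hk'
      rw [gb, e, cP_succ q M]
      have hM : q ^ M = q ^ k * q ^ (M - k) := by rw [← pow_add]; congr 1; omega
      rcases hk'.eq_or_lt with h | h
      · subst h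
        rw [gb_eq_zero q k (k + 1) (by omega), cP_succ]
        simp only [Nat.sub_self] at *
        linear_combination (1 - q * q ^ k) * i1
      · have i2 := ih (k + 1) h
        obtain ⟨d, rfl⟩ : ∃ d, M = k + 1 + d := ⟨M - (k + 1), by omega⟩
        have e1 : k + 1 + d - (k + 1) = d := by omega
        have e2 : k + 1 + d - k = d + 1 := by omega
        rw [e1] at i2
        rw [e2] at i1 hM ⊢
        rw [cP_succ q d] at i1 ⊢
        rw [cP_succ q k] at i2 ⊢
        rw [hM]
        linear_combination (1 - q * q ^ d) * i2 + q ^ (d + 1) * (1 - q * q ^ k) * i1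

noncomputable def tm (q x : ℂ) (n : ℤ) : ℂ := (-x) ^ n * q ^ (n * (n - 1) / 2)

lemma ediv_succ (n : ℤ) : (n + 1) * (n + 1 - 1) / 2 = n * (n - 1) / 2 + n := by
  rw [show (n + 1) * (n + 1 - 1) = n * (n - 1) + n * 2 by ring]
  exact Int.add_mul_ediv_right _ _ (by norm_num)

lemma tm_succ {q x : ℂ} (hq0 : q ≠ 0) (hx : x ≠ 0) (n : ℤ) : tm q x (n + 1) = tm q x n * (-x * q ^ n) := by
  unfold tm
  rw [ediv_succ, zpow_add₀ hq0, zpow_add_one₀ (neg_ne_zero.2 hx)]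
  ring

lemma tm_ne {q x : ℂ} (hq0 : q ≠ 0) (hx : x ≠ 0) (n : ℤ) : tm q x n ≠ 0 :=
  mul_ne_zero (zpow_ne_zero _ (neg_ne_zero.2 hx)) (zpow_ne_zero _ hq0)

lemma tm_summable {q x : ℂ} (hq0 : q ≠ 0) (hq : ‖q‖ < 1) (hx : x ≠ 0) :
    Summable fun n : ℤ => ‖tm q x n‖ := by
  have ht : Tendsto (fun n : ℕ => ‖q‖ ^ n) atTop (𝓝 0) :=
    tendsto_pow_atTop_nhds_zero_of_lt_one (norm_nonneg _) hq
  apply Summable.of_nat_of_neg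
  · apply summable_of_ratio_test_tendsto_lt_one (l := 0) (by norm_num)
    · exact Eventually.of_forall fun n => norm_ne_zero_iff.2 (tm_ne hq0 hx _)
    · have := ht.const_mul ‖x‖
      rw [mul_zero] at this
      refine this.congr fun n => ?_
      push_cast
      rw [tm_succ hq0 hx, norm_norm, norm_norm, norm_mul, norm_mul, norm_neg]
      have := norm_ne_zero_iff.2 (tm_ne hq0 hx (n : ℤ))
      simp
      field_simp
  · apply summable_of_ratio_test_tendsto_lt_one (l := 0) (by norm_num)
    · exact Eventually.of_forall fun n => norm_ne_zero_iff.2 (tm_ne hq0 hx _)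
    · have := (ht.comp (tendsto_add_atTop_nat 1)).const_mul ‖x‖⁻¹
      rw [mul_zero] at this
      refine this.congr fun n => ?_
      have h := tm_succ hq0 hx (-((n + 1 : ℕ) : ℤ))
      rw [show (-((n + 1 : ℕ) : ℤ)) + 1 = -(n : ℤ) by push_cast; ring] at h
      rw [h]
      simp only [Function.comp, norm_norm, norm_mul, norm_neg, zpow_neg, zpow_natCast, norm_inv, norm_pow]
      have h1 := norm_ne_zero_iff.2 (tm_ne hq0 hx (-((n + 1 : ℕ) : ℤ)))
      have h2 := norm_ne_zero_iff.2 hq0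
      have h3 := norm_ne_zero_iff.2 hx
      field_simp

lemma choose_two_cast (k : ℕ) : ((k.choose 2 : ℕ) : ℤ) = (k : ℤ) * (k - 1) / 2 := by
  induction k with
  | zero => simp
  | succ k ih =>
    rw [Nat.choose_succ_succ' k 1, Nat.choose_one_right]
    push_cast
    rw [ih, ediv_succ]; ring

lemma two_e (n : ℤ) : 2 * (n * (n - 1) / 2) = n * (n - 1) :=
  Int.mul_ediv_cancel' (Int.even_mul_pred_self n).two_dvd

lemma sum_range_choose (N : ℕ) : ∑ i ∈ Finset.range N, (i + 1) = (N + 1).choose 2 := by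
  induction N with
  | zero => simp
  | succ N ih =>
    rw [Finset.sum_range_succ, ih, Nat.choose_succ_succ' (N + 1) 1, Nat.choose_one_right]; ring

lemma finite_jtp {q x : ℂ} (hq0 : q ≠ 0) (hx : x ≠ 0) (N : ℕ) :
    (∏ j ∈ Finset.range N, (1 - x * q ^ j)) * (∏ j ∈ Finset.range N, (1 - (q / x) * q ^ j)) =
    ∑ k ∈ Finset.range (2 * N + 1), tm q x ((k : ℤ) - N) * gb q (2 * N) k := by
  have hx' : -x ≠ 0 := neg_ne_zero.2 hx
  have hb := gb_binom q (-x * (q ^ N)⁻¹) (2 * N)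
  nth_rw 1 [two_mul] at hb
  rw [Finset.prod_range_add] at hb
  have h2 : ∏ j ∈ Finset.range N, (1 + -x * (q ^ N)⁻¹ * q ^ (N + j)) =
      ∏ j ∈ Finset.range N, (1 - x * q ^ j) := by
    apply Finset.prod_congr rfl
    intro j _
    rw [pow_add]; field_simp; ring
  have h1 : ∏ j ∈ Finset.range N, (1 + -x * (q ^ N)⁻¹ * q ^ j) =
      ((-x) ^ N * (q ^ ((N + 1).choose 2))⁻¹) * ∏ j ∈ Finset.range N, (1 - (q / x) * q ^ j) := by
    rw [← Finset.prod_range_reflect]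
    have : ∀ j ∈ Finset.range N, (1 + -x * (q ^ N)⁻¹ * q ^ (N - 1 - j)) =
       (-x * (q ^ (j + 1))⁻¹) * (1 - (q / x) * q ^ j) := by
      intro j hj
      have : q ^ N = q ^ (j + 1) * q ^ (N - 1 - j) := by
        rw [← pow_add]; congr 1; simp at hj; omega
      rw [this]; field_simp; ring
    rw [Finset.prod_congr rfl this, Finset.prod_mul_distrib, Finset.prod_mul_distrib]
    congr 1
    rw [Finset.prod_const, Finset.card_range]
    congr 1
    rw [Finset.prod_inv_distrib, Finset.prod_pow_eq_pow_sum, sum_range_choose]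
  rw [h1, h2] at hb
  have h0 : ((-x) ^ N * (q ^ ((N + 1).choose 2))⁻¹) ≠ 0 :=
    mul_ne_zero (pow_ne_zero _ hx') (inv_ne_zero (pow_ne_zero _ hq0))
  apply mul_left_cancel₀ h0
  rw [Finset.mul_sum]
  refine Eq.trans (by ring) (hb.trans ?_)
  apply Finset.sum_congr rfl
  intro k _
  unfold tm
  have e : ((k : ℤ) - N) * (k - N - 1) / 2 = (k.choose 2 : ℕ) - (N * k : ℕ) + ((N + 1).choose 2 : ℕ) := by
    have := two_e ((k : ℤ) - N)
    have a1 := two_e k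
    have a2 := two_e (N + 1)
    rw [choose_two_cast, choose_two_cast]
    push_cast
    apply mul_left_cancel₀ (two_ne_zero (α := ℤ))
    linear_combination this - a1 - a2
  rw [e, zpow_sub₀ hx', zpow_add₀ hq0, zpow_sub₀ hq0]
  simp only [zpow_natCast]
  rw [mul_pow, pow_mul, inv_pow]
  field_simp

lemma cP_tendsto {q : ℂ} (hq : ‖q‖ < 1) : Tendsto (cP q) atTop (𝓝 (pA q q)) := pA_tendsto hq q

lemma cP_ne {q : ℂ} (hq : ‖q‖ < 1) (n : ℕ) : cP q n ≠ 0 := by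
  unfold cP
  rw [Finset.prod_ne_zero_iff]
  intro j _ h
  have : ‖q * q ^ j‖ < 1 := by
    rw [← pow_succ', norm_pow]; exact pow_lt_one₀ (norm_nonneg _) hq (by omega)
  rw [← sub_eq_zero.1 h] at this
  simp at this

lemma gb_bound {q : ℂ} (hq : ‖q‖ < 1) : ∃ C : ℝ, ∀ M k, ‖gb q M k‖ ≤ C := by
  obtain ⟨C1, h1⟩ := ((cP_tendsto hq).norm).bddAbove_range
  obtain ⟨C2, h2⟩ := (((cP_tendsto hq).inv₀ (pA_ne' hq hq)).norm).bddAbove_range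
  have h1' : ∀ n, ‖cP q n‖ ≤ C1 := fun n => h1 ⟨n, rfl⟩
  have h2' : ∀ n, ‖(cP q n)⁻¹‖ ≤ C2 := fun n => h2 ⟨n, rfl⟩
  have p1 := (norm_nonneg _).trans (h1' 0)
  have p2 := (norm_nonneg _).trans (h2' 0)
  refine ⟨C1 * C2 * C2, fun M k => ?_⟩
  rcases le_or_gt k M with h | h
  · have := gb_mul q M k h
    have e : gb q M k = cP q M * (cP q k)⁻¹ * (cP q (M - k))⁻¹ := by
      have := cP_ne hq k
      have := cP_ne hq (M - k)
      field_simp; assumption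
    rw [e, norm_mul, norm_mul]
    have := h1' M
    have := h2' k
    have := h2' (M - k)
    gcongr
  · rw [gb_eq_zero q M k h, norm_zero]; positivity

theorem jtp {q x : ℂ} (hq0 : q ≠ 0) (hq : ‖q‖ < 1) (hx : x ≠ 0) :
    ∑' n : ℤ, tm q x n = pA q q * (pA q x * pA q (q / x)) := by
  obtain ⟨C, hC⟩ := gb_bound hq
  have hP := pA_ne' hq hq
  let f : ℕ → ℤ → ℂ := fun N n => if n ∈ Finset.Icc (-(N : ℤ)) N then
    tm q x n * gb q (2 * N) (n + N).toNat else 0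
  have hf : ∀ N, ∑' n, f N n = (∏ j ∈ Finset.range N, (1 - x * q ^ j)) *
      (∏ j ∈ Finset.range N, (1 - (q / x) * q ^ j)) := by
    intro N
    rw [finite_jtp hq0 hx, tsum_eq_sum (s := Finset.Icc (-(N : ℤ)) N)]
    · symm
      apply Finset.sum_nbij' (fun k : ℕ => (k : ℤ) - N) (fun n : ℤ => (n + N).toNat)
      · intro k hk; simp at hk ⊢; omega
      · intro k hk; simp at hk ⊢; omega
      · intro k hk; simp
      · intro k hk; simp at hk ⊢; omega
      · intro k hk
        have : (k : ℤ) - N ∈ Finset.Icc (-(N : ℤ)) N := by simp at hk ⊢; omega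
        simp only [f, if_pos this]
        simp
    · intro b hb
      simp only [f, if_neg hb]
  have hlim : Tendsto (fun N => ∑' n, f N n) atTop (𝓝 (∑' n, tm q x n * (pA q q)⁻¹)) := by
    apply tendsto_tsum_of_dominated_convergence (bound := fun n => ‖tm q x n‖ * C)
      ((tm_summable hq0 hq hx).mul_right C)
    · intro n
      have hev : ∀ᶠ N : ℕ in atTop, f N n =
          tm q x n * (cP q (2 * N) * (cP q (n + N).toNat)⁻¹ * (cP q (2 * N - (n + N).toNat))⁻¹) := by
        filter_upwards [eventually_ge_atTop n.natAbs] with N hN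
        have : n ∈ Finset.Icc (-(N : ℤ)) N := by simp; omega
        simp only [f, if_pos this]
        have h := gb_mul q (2 * N) (n + N).toNat (by simp at this; omega)
        have := cP_ne hq (n + N).toNat
        have := cP_ne hq (2 * N - (n + N).toNat)
        congr 1
        field_simp; assumption
      refine Tendsto.congr' (hev.mono fun _ h => h.symm) ?_
      apply Tendsto.const_mul
      have t1 : Tendsto (fun N : ℕ => cP q (2 * N)) atTop (𝓝 (pA q q)) :=
        (cP_tendsto hq).comp (tendsto_atTop_atTop.2 fun b => ⟨b, fun a ha => by omega⟩)
      have t2 : Tendsto (fun N : ℕ => cP q (n + N).toNat) atTop (𝓝 (pA q q)) :=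
        (cP_tendsto hq).comp (tendsto_atTop_atTop.2 fun b => ⟨b + n.natAbs, fun a ha => by omega⟩)
      have t3 : Tendsto (fun N : ℕ => cP q (2 * N - (n + N).toNat)) atTop (𝓝 (pA q q)) :=
        (cP_tendsto hq).comp (tendsto_atTop_atTop.2 fun b => ⟨b + n.natAbs, fun a ha => by omega⟩)
      have := (t1.mul (t2.inv₀ hP)).mul (t3.inv₀ hP)
      rwa [mul_inv_cancel₀ hP, one_mul] at this
    · refine Eventually.of_forall fun N n => ?_
      have C0 : 0 ≤ C := (norm_nonneg _).trans (hC 0 0)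
      simp only [f]
      split_ifs
      · rw [norm_mul]; gcongr; exact hC _ _
      · rw [norm_zero]; positivity
  simp only [hf] at hlim
  have := tendsto_nhds_unique hlim ((pA_tendsto hq x).mul (pA_tendsto hq (q / x)))
  rw [tsum_mul_right] at this
  rw [← this]; field_simp

noncomputable def pT (q x : ℂ) : ℂ := pA q x * pA q (q / x)

def sumEq : (ℤ × ℤ) ⊕ (ℤ × ℤ) ≃ ℤ × ℤ where
  toFun s := match s with
    | Sum.inl p => (p.1 + p.2, p.1 - p.2)
    | Sum.inr p => (p.1 + p.2 + 1, p.1 - p.2)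
  invFun p := if (p.1 + p.2) % 2 = 0 then Sum.inl ((p.1 + p.2) / 2, (p.1 - p.2) / 2)
    else Sum.inr ((p.1 + p.2 - 1) / 2, (p.1 - p.2 - 1) / 2)
  left_inv s := by
    rcases s with ⟨a, b⟩ | ⟨a, b⟩
    · have : (a + b + (a - b)) % 2 = 0 := by omega
      simp only [this, if_true, Sum.inl.injEq, Prod.mk.injEq]; omega
    · have : ¬ (a + b + 1 + (a - b)) % 2 = 0 := by omega
      simp only [this, if_false, Sum.inr.injEq, Prod.mk.injEq]; omega
  right_inv p := by
    obtain ⟨m, n⟩ := p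
    by_cases h : (m + n) % 2 = 0
    · simp only [h, if_true, Prod.mk.injEq]; omega
    · simp only [h, if_false, Prod.mk.injEq]; omega

lemma tm_sq {q y : ℂ} (hq0 : q ≠ 0) (b : ℤ) : tm (q ^ 2) (-y ^ 2) b = y ^ (2 * b) * q ^ (b * (b - 1)) := by
  unfold tm
  rw [neg_neg, show b * (b - 1) = 2 * (b * (b - 1) / 2) from (two_e b).symm, zpow_mul, zpow_mul,
    Int.mul_ediv_cancel_left _ two_ne_zero]
  norm_cast

lemma tm_sq' {q y : ℂ} (hq0 : q ≠ 0) (b : ℤ) : tm (q ^ 2) (-(q * y ^ 2)) b = y ^ (2 * b) * q ^ (b * b) := by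
  unfold tm
  rw [neg_neg, show b * b = b + 2 * (b * (b - 1) / 2) by rw [two_e]; ring, zpow_add₀ hq0, zpow_mul,
    zpow_mul, mul_zpow]
  norm_cast
  ring

lemma tm_even {q x y : ℂ} (hq0 : q ≠ 0) (hx : x ≠ 0) (hy : y ≠ 0) (a b : ℤ) :
    tm q (x * y) (a + b) * tm q (x / y) (a - b) = tm (q ^ 2) (-x ^ 2) a * tm (q ^ 2) (-(q * y ^ 2)) b := by
  rw [tm_sq hq0, tm_sq' hq0]
  unfold tm
  have e : (a + b) * (a + b - 1) / 2 + (a - b) * (a - b - 1) / 2 = a * (a - 1) + b * b := by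
    apply mul_left_cancel₀ (two_ne_zero (α := ℤ))
    linear_combination two_e (a + b) + two_e (a - b)
  have hx' : -x ≠ 0 := neg_ne_zero.2 hx
  rw [show -(x * y) = (-x) * y by ring, show -(x / y) = (-x) * y⁻¹ by ring, mul_zpow, mul_zpow]
  have h1 : (-x) ^ (a + b) * (-x) ^ (a - b) = x ^ (2 * a) := by
    rw [← zpow_add₀ hx', show a + b + (a - b) = 2 * a by ring, (even_two_mul a).neg_zpow]
  have h2 : y ^ (a + b) * y⁻¹ ^ (a - b) = y ^ (2 * b) := by
    rw [inv_zpow', ← zpow_add₀ hy]; congr 1; ring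
  have h3 : q ^ ((a + b) * (a + b - 1) / 2) * q ^ ((a - b) * (a - b - 1) / 2) = q ^ (a * (a - 1)) * q ^ (b * b) := by
    rw [← zpow_add₀ hq0, ← zpow_add₀ hq0, e]
  rw [← h1, ← h2]
  linear_combination (-x) ^ (a + b) * (-x) ^ (a - b) * (y ^ (a + b) * y⁻¹ ^ (a - b)) * h3

lemma tm_odd {q x y : ℂ} (hq0 : q ≠ 0) (hx : x ≠ 0) (hy : y ≠ 0) (a b : ℤ) :
    tm q (x * y) (a + b + 1) * tm q (x / y) (a - b) =
     (-x / y) * (tm (q ^ 2) (-(q * x ^ 2)) a * tm (q ^ 2) (-y ^ 2) (b + 1)) := by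
  rw [tm_succ hq0 (mul_ne_zero hx hy), mul_right_comm, tm_even hq0 hx hy]
  rw [tm_sq hq0, tm_sq hq0, tm_sq' hq0, tm_sq' hq0]
  have h1 : y ^ (2 * (b + 1)) = y ^ (2 * b) * y * y := by
    rw [show 2 * (b + 1) = 2 * b + 1 + 1 by ring, zpow_add_one₀ hy, zpow_add_one₀ hy]
  have h2 : q ^ (a * (a - 1)) * q ^ (b * b) * q ^ (a + b) = q ^ (a * a) * q ^ ((b + 1) * (b + 1 - 1)) := by
    rw [← zpow_add₀ hq0, ← zpow_add₀ hq0, ← zpow_add₀ hq0]; congr 1; ring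
  rw [h1]
  field_simp
  linear_combination (-1 : ℂ) * h2

lemma theta_rank2 {q x y : ℂ} (hq0 : q ≠ 0) (hq : ‖q‖ < 1) (hx : x ≠ 0) (hy : y ≠ 0) :
    (∑' n, tm q (x * y) n) * (∑' n, tm q (x / y) n) =
     (∑' n, tm (q ^ 2) (-x ^ 2) n) * (∑' n, tm (q ^ 2) (-(q * y ^ 2)) n)
     - x / y * ((∑' n, tm (q ^ 2) (-(q * x ^ 2)) n) * (∑' n, tm (q ^ 2) (-y ^ 2) n)) := by
  have hq2 : ‖q ^ 2‖ < 1 := by rw [norm_pow]; exact pow_lt_one₀ (norm_nonneg _) hq (by norm_num)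
  have hq20 : q ^ 2 ≠ 0 := pow_ne_zero _ hq0
  have s1 := tm_summable hq0 hq (mul_ne_zero hx hy)
  have s2 := tm_summable hq0 hq (div_ne_zero hx hy)
  have s3 := tm_summable hq20 hq2 (neg_ne_zero.2 (pow_ne_zero 2 hx))
  have s4 := tm_summable hq20 hq2 (neg_ne_zero.2 (mul_ne_zero hq0 (pow_ne_zero 2 hy)))
  have s5 := tm_summable hq20 hq2 (neg_ne_zero.2 (mul_ne_zero hq0 (pow_ne_zero 2 hx)))
  have s6 := tm_summable hq20 hq2 (neg_ne_zero.2 (pow_ne_zero 2 hy))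
  have s6' : Summable fun n : ℤ => ‖tm (q ^ 2) (-y ^ 2) (n + 1)‖ :=
    s6.comp_injective (add_left_injective 1)
  have sh : ∑' n, tm (q ^ 2) (-y ^ 2) n = ∑' n, tm (q ^ 2) (-y ^ 2) (n + 1) :=
    ((Equiv.addRight (1 : ℤ)).tsum_eq _).symm
  rw [sh, tsum_mul_tsum_of_summable_norm s1 s2, tsum_mul_tsum_of_summable_norm s3 s4,
    tsum_mul_tsum_of_summable_norm s5 s6', ← sumEq.tsum_eq]
  have S : Summable fun c => tm q (x * y) (sumEq c).1 * tm q (x / y) (sumEq c).2 :=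
    (summable_mul_of_summable_norm s1 s2).comp_injective sumEq.injective
  rw [Summable.tsum_sum (S.comp_injective Sum.inl_injective) (S.comp_injective Sum.inr_injective)]
  simp only [sumEq, Equiv.coe_fn_mk, tm_even hq0 hx hy, tm_odd hq0 hx hy]
  rw [tsum_mul_left]
  ring

lemma pT_weier {q x y u v : ℂ} (hq0 : q ≠ 0) (hq : ‖q‖ < 1) (hx : x ≠ 0) (hy : y ≠ 0)
    (hu : u ≠ 0) (hv : v ≠ 0) :
    y * (pT q (x * y) * pT q (x / y)) * (pT q (u * v) * pT q (u / v))
     - u * (pT q (x * u) * pT q (x / u)) * (pT q (y * v) * pT q (y / v))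
     + u * (pT q (x * v) * pT q (x / v)) * (pT q (y * u) * pT q (y / u)) = 0 := by
  have hP := pA_ne' hq hq
  have key : ∀ x y : ℂ, x ≠ 0 → y ≠ 0 → pT q (x * y) * pT q (x / y) =
     ((∑' n, tm (q ^ 2) (-x ^ 2) n) * (∑' n, tm (q ^ 2) (-(q * y ^ 2)) n)
     - x / y * ((∑' n, tm (q ^ 2) (-(q * x ^ 2)) n) * (∑' n, tm (q ^ 2) (-y ^ 2) n))) / (pA q q) ^ 2 := by
    intro x y hx hy
    rw [← theta_rank2 hq0 hq hx hy, jtp hq0 hq (mul_ne_zero hx hy), jtp hq0 hq (div_ne_zero hx hy)]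
    unfold pT
    field_simp
  rw [key x y hx hy, key u v hu hv, key x u hx hu, key y v hy hv, key x v hx hv, key y u hy hu]
  field_simp
  ring

lemma pT_inv {q x : ℂ} (hq : ‖q‖ < 1) (hx : x ≠ 0) : pT q x⁻¹ = -x⁻¹ * pT q x := by
  unfold pT
  rw [pA_rec hq x⁻¹, pA_rec hq x, div_inv_eq_mul, ← div_eq_mul_inv]
  field_simp; ring

lemma pT_symm {q x : ℂ} (hq0 : q ≠ 0) : pT q (q / x) = pT q x := by
  unfold pT
  rw [div_div_cancel₀ hq0, mul_comm]

lemma hasDerivAt_tprod_zero {a : ℕ → ℂ} (ha : Summable fun j => ‖a j‖) :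
    HasDerivAt (fun w : ℂ => ∏' j, (1 - w * a j)) (-∑' j, a j) 0 := by
  have hm : MultipliableLocallyUniformlyOn (fun j (w : ℂ) => 1 - w * a j) (Metric.ball 0 1) := by
    simp only [sub_eq_add_neg]
    apply Summable.multipliableLocallyUniformlyOn_nat_one_add (u := fun j => ‖a j‖) Metric.isOpen_ball ha
    · refine Eventually.of_forall fun n w hw => ?_
      rw [norm_neg, norm_mul]
      have : ‖w‖ ≤ 1 := (mem_ball_zero_iff.1 hw).le
      exact mul_le_of_le_one_left (norm_nonneg _) this
    · intro n; fun_prop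
  have hd : DifferentiableOn ℂ (fun w : ℂ => ∏' j, (1 - w * a j)) (Metric.ball 0 1) :=
    hm.hasProdLocallyUniformlyOn.differentiableOn
    (.of_forall fun _ ↦ by simpa [Finset.prod_fn] using
      DifferentiableOn.finsetProd (fun _ _ ↦ by fun_prop)) Metric.isOpen_ball
  have h0 : (0 : ℂ) ∈ Metric.ball (0 : ℂ) 1 := by simp
  have hd0 := (hd.differentiableAt (Metric.isOpen_ball.mem_nhds h0)).hasDerivAt
  have hl : ∀ i, logDeriv (fun w : ℂ => 1 - w * a i) 0 = - a i := by
    intro i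
    have : HasDerivAt (fun w : ℂ => 1 - w * a i) (-a i) 0 := by
      simpa using ((hasDerivAt_id (0 : ℂ)).mul_const (a i)).const_sub 1
    rw [logDeriv_apply, this.deriv]; simp
  have := logDeriv_tprod_eq_tsum (f := fun j (w : ℂ) => 1 - w * a j) Metric.isOpen_ball h0 (by simp)
    (fun i => by fun_prop) (by simp only [hl]; exact ha.of_norm.neg) hm (by simp)
  simp only [hl, tsum_neg, logDeriv_apply] at this
  simp only [zero_mul, sub_zero, tprod_one, div_one] at this
  rwa [this] at hd0

noncomputable def aa (q x : ℂ) (j : ℕ) : ℂ := x * q ^ j / (1 - x * q ^ j) ^ 2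

lemma aa_summable {q : ℂ} (hq : ‖q‖ < 1) (x : ℂ) : Summable fun j => ‖aa q x j‖ := by
  have t : Tendsto (fun j : ℕ => ‖((1 - x * q ^ j) ^ 2)⁻¹‖) atTop (𝓝 ‖((1 - x * 0 : ℂ) ^ 2)⁻¹‖) := by
    apply Tendsto.norm
    apply Tendsto.inv₀ _ (by simp)
    exact (((tendsto_pow_atTop_nhds_zero_of_norm_lt_one hq).const_mul x).const_sub 1).pow 2
  obtain ⟨C, hC⟩ := t.bddAbove_range
  apply Summable.of_nonneg_of_le (fun _ => norm_nonneg _) _ ((pA_summable hq x).mul_right C)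
  intro j
  unfold aa
  rw [div_eq_mul_inv, norm_mul, norm_neg]
  gcongr
  exact hC ⟨j, rfl⟩

noncomputable def pH (q x w : ℂ) : ℂ := ∏' j, (1 - w * aa q x j)

lemma pH_eq {q x u : ℂ} (hq : ‖q‖ < 1) (hu : u ≠ 0) (h : ∀ j : ℕ, x * q ^ j ≠ 1) :
    pA q (x * u) * pA q (x / u) = pA q x ^ 2 * pH q x ((1 - u) ^ 2 / u) := by
  have hm : Multipliable fun j => (1 - ((1 - u) ^ 2 / u) * aa q x j) := by
    simp only [sub_eq_add_neg]
    apply multipliable_one_add_of_summable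
    simp only [norm_neg, norm_mul]
    exact (aa_summable hq x).mul_left _
  have t1 := (pA_tendsto hq (x * u)).mul (pA_tendsto hq (x / u))
  have t2 := ((pA_tendsto hq x).pow 2).mul hm.hasProd.tendsto_prod_nat
  refine tendsto_nhds_unique t1 (t2.congr fun N => ?_)
  rw [← Finset.prod_pow, ← Finset.prod_mul_distrib, ← Finset.prod_mul_distrib]
  apply Finset.prod_congr rfl
  intro j _
  unfold aa
  have : 1 - x * q ^ j ≠ 0 := fun hh => h j (sub_eq_zero.1 hh).symm
  field_simp
  ring

lemma pT_pH {q x u : ℂ} (hq : ‖q‖ < 1) (hu : u ≠ 0)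
    (h : ∀ j : ℕ, x * q ^ j ≠ 1) (h' : ∀ j : ℕ, q / x * q ^ j ≠ 1) :
    pT q (x * u) * pT q (x / u) = pT q x ^ 2 * (pH q x ((1 - u) ^ 2 / u) * pH q (q / x) ((1 - u) ^ 2 / u)) := by
  have h1 := pH_eq hq hu h
  have h2 := pH_eq hq hu h'
  unfold pT
  rw [show q / (x * u) = q / x / u by field_simp, show q / (x / u) = q / x * u by field_simp]
  linear_combination pA q (q / x / u) * pA q (q / x * u) * h1 +
    pA q x ^ 2 * pH q x ((1 - u) ^ 2 / u) * h2

theorem wp_diff {q x y : ℂ} (hq0 : q ≠ 0) (hq : ‖q‖ < 1) (hx0 : x ≠ 0) (hy0 : y ≠ 0)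
    (hx : ∀ j : ℕ, x * q ^ j ≠ 1) (hx' : ∀ j : ℕ, q / x * q ^ j ≠ 1)
    (hy : ∀ j : ℕ, y * q ^ j ≠ 1) (hy' : ∀ j : ℕ, q / y * q ^ j ≠ 1) :
    y * (pT q (x * y) * pT q (x / y)) * pA q q ^ 4 = pT q x ^ 2 * pT q y ^ 2 *
     ((∑' j, aa q y j + ∑' j, aa q (q / y) j) - (∑' j, aa q x j + ∑' j, aa q (q / x) j)) := by
  set Φ : ℂ → ℂ := fun w => pH q x w * pH q (q / x) w - pH q y w * pH q (q / y) w with hΦ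
  have hd : ∀ z, HasDerivAt (pH q z) (-∑' j, aa q z j) 0 := fun z =>
    hasDerivAt_tprod_zero (aa_summable hq z)
  have hH0 : ∀ z, pH q z 0 = 1 := fun z => by simp [pH]
  have hΦd : HasDerivAt Φ ((∑' j, aa q y j + ∑' j, aa q (q / y) j) - (∑' j, aa q x j + ∑' j, aa q (q / x) j)) 0 := by
    refine HasDerivAt.congr_deriv (((hd x).mul (hd (q / x))).sub ((hd y).mul (hd (q / y)))) ?_
    simp only [hH0]; ring
  have hΦ0 : Φ 0 = 0 := by simp [hΦ, hH0]
  rw [hasDerivAt_iff_tendsto_slope] at hΦd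
  have hw : Tendsto (fun u : ℂ => (1 - u) ^ 2 / u) (𝓝[≠] 1) (𝓝[≠] 0) := by
    apply tendsto_nhdsWithin_of_tendsto_nhds_of_eventually_within
    · have : ContinuousAt (fun u : ℂ => (1 - u) ^ 2 / u) 1 := by
        apply ContinuousAt.div <;> first | fun_prop | simp
      have h := this.tendsto
      simp only [sub_self] at h
      refine Tendsto.mono_left ?_ nhdsWithin_le_nhds
      simpa using h
    · have h1 : ∀ᶠ u : ℂ in 𝓝[≠] 1, u ≠ 0 :=
        nhdsWithin_le_nhds (isOpen_ne.mem_nhds one_ne_zero)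
      filter_upwards [h1, self_mem_nhdsWithin] with u h0 h1
      have : 1 - u ≠ 0 := fun h => h1 (sub_eq_zero.1 h).symm
      simp [h0, this]
  have lim1 := (hΦd.comp hw).const_mul (pT q x ^ 2 * pT q y ^ 2)
  have lim2 : Tendsto (fun u : ℂ => y * (pT q (x * y) * pT q (x / y)) * (pA q (q * u) * pA q (q / u)) ^ 2)
      (𝓝[≠] 1) (𝓝 (y * (pT q (x * y) * pT q (x / y)) * pA q q ^ 4)) := by
    refine Tendsto.mono_left ?_ nhdsWithin_le_nhds
    have c := pA_cont hq
    have : ContinuousAt (fun u : ℂ => y * (pT q (x * y) * pT q (x / y)) * (pA q (q * u) * pA q (q / u)) ^ 2) 1 := by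
      have c1 : ContinuousAt (fun u : ℂ => pA q (q * u)) 1 := by fun_prop
      have c2 : ContinuousAt (fun u : ℂ => pA q (q / u)) 1 :=
        c.continuousAt.comp (continuousAt_const.div continuousAt_id one_ne_zero)
      exact continuousAt_const.mul ((c1.mul c2).pow 2)
    have h := this.tendsto
    simp only [mul_one, div_one] at h
    convert h using 2
    ring
  refine tendsto_nhds_unique lim2 (lim1.congr' ?_)
  have h1 : ∀ᶠ u : ℂ in 𝓝[≠] 1, u ≠ 0 :=
    nhdsWithin_le_nhds (isOpen_ne.mem_nhds one_ne_zero)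
  filter_upwards [h1, self_mem_nhdsWithin] with u h0 h1
  have h1' : 1 - u ≠ 0 := fun h => h1 (sub_eq_zero.1 h).symm
  have W := pT_weier hq0 hq hx0 hy0 h0 one_ne_zero
  simp only [mul_one, div_one] at W
  rw [pT_pH hq h0 hx hx', pT_pH hq h0 hy hy'] at W
  have hT : pT q u = (1 - u) * (pA q (q * u) * pA q (q / u)) := by
    unfold pT; rw [pA_rec hq u]; ring
  rw [hT] at W
  simp only [Function.comp, slope_def_field, hΦ0, sub_zero]
  simp only [hΦ]
  set w := (1 - u) ^ 2 / u with hwdef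
  have hwu : w * u = (1 - u) ^ 2 := by rw [hwdef]; field_simp
  have hw0 : w ≠ 0 := by rw [hwdef]; positivity
  field_simp
  apply mul_left_cancel₀ h0
  linear_combination -W - y * (pT q (x * y) * pT q (x / y)) * (pA q (q * u) * pA q (q / u)) ^ 2 * hwu

noncomputable def ff (t : ℂ) : ℂ :=
  t * ((1 + t ^ 2) ^ 3 - 7 * (1 + t ^ 2) * t ^ 2 + 4 * t ^ 3) / (1 - t + t ^ 2 - t ^ 3 + t ^ 4) ^ 2

lemma norm_pow_lt {q : ℂ} (hq : ‖q‖ < 1) (n : ℕ) (hn : n ≠ 0) : ‖q ^ n‖ < 1 := by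
  rw [norm_pow]; exact pow_lt_one₀ (norm_nonneg _) hq hn

lemma ne_one_aux {q z : ℂ} (hq : ‖q‖ < 1) (hz : ‖z‖ = 1) (hz1 : z ≠ 1) (j : ℕ) : z * q ^ j ≠ 1 := by
  rcases Nat.eq_zero_or_pos j with rfl | hj
  · simpa using hz1
  · intro h
    have := norm_pow_lt hq j hj.ne'
    have h2 := congrArg norm h
    rw [norm_mul, hz, one_mul, norm_one] at h2
    linarith

lemma ne_one_aux' {q z : ℂ} (hq : ‖q‖ < 1) (hz : ‖z‖ = 1) (j : ℕ) : q / z * q ^ j ≠ 1 := by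
  intro h
  have := norm_pow_lt hq (j + 1) (by omega)
  have h2 := congrArg norm h
  rw [div_mul_eq_mul_div, ← pow_succ', norm_div, hz, div_one, norm_one] at h2
  linarith

lemma M10 {q w : ℂ} (hq : ‖q‖ < 1) (hw : w ^ 4 - w ^ 3 + w ^ 2 - w + 1 = 0) (hw0 : w ≠ 0) :
    pA q (q * w) * pA q (q / w) * (pA q (q * w ^ 3) * pA q (q / w ^ 3)) * pA (q ^ 2) (q ^ 2) * pA (q ^ 5) (q ^ 5)
     = pA q q * pA (q ^ 10) (q ^ 10) := by
  have h5 : w ^ 5 = -1 := by linear_combination (w + 1) * hw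
  have i1 : q / w = q * (-w ^ 4) := by rw [div_eq_iff (by positivity)]; linear_combination q * h5
  have i3 : q / w ^ 3 = q * (-w ^ 2) := by rw [div_eq_iff (by positivity)]; linear_combination q * h5
  rw [i1, i3]
  have t1 := (((((pA_tendsto hq (q * w)).mul (pA_tendsto hq (q * (-w ^ 4)))).mul
    ((pA_tendsto hq (q * w ^ 3)).mul (pA_tendsto hq (q * (-w ^ 2))))).mul
    (pA_tendsto (norm_pow_lt hq 2 (by norm_num)) (q ^ 2))).mul
    (pA_tendsto (norm_pow_lt hq 5 (by norm_num)) (q ^ 5)))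
  have t2 := (pA_tendsto hq q).mul (pA_tendsto (norm_pow_lt hq 10 (by norm_num)) (q ^ 10))
  refine tendsto_nhds_unique t1 (t2.congr fun N => ?_)
  simp only [← Finset.prod_mul_distrib]
  apply Finset.prod_congr rfl
  intro j _
  have : ∀ n, q ^ n * (q ^ n) ^ j = (q * q ^ j) ^ n := fun n => by rw [mul_pow, ← pow_mul, ← pow_mul, mul_comm j]
  rw [this, this, this]
  have hh : ∀ c, q * c * q ^ j = q * q ^ j * c := fun c => by ring
  rw [hh, hh, hh, hh]
  generalize q * q ^ j = t
  have : (1 - t * w) * (1 - t * -w ^ 4) * ((1 - t * w ^ 3) * (1 - t * -w ^ 2)) = 1 - t + t ^ 2 - t ^ 3 + t ^ 4 := by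
    have e1 : (1 - t * w) * (1 - t * -w ^ 4) = 1 - (w - w ^ 4) * t + t ^ 2 := by linear_combination - t ^ 2 * h5
    have e2 : (1 - t * w ^ 3) * (1 - t * -w ^ 2) = 1 - (w ^ 3 - w ^ 2) * t + t ^ 2 := by linear_combination - t ^ 2 * h5
    have e3 : (w - w ^ 4) * (w ^ 3 - w ^ 2) = -1 := by
      linear_combination hw + (w - w ^ 2) * h5
    rw [e1, e2]
    linear_combination (t + t ^ 3) * hw + t ^ 2 * e3
  rw [this]
  ring

lemma M5 {q w : ℂ} (hq : ‖q‖ < 1) (hw : w ^ 4 - w ^ 3 + w ^ 2 - w + 1 = 0) (hw0 : w ≠ 0) :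
    pA q (q * w ^ 2) * pA q (q / w ^ 2) * (pA q (q * w ^ 4) * pA q (q / w ^ 4)) * pA q q
     = pA (q ^ 5) (q ^ 5) := by
  have h5 : w ^ 5 = -1 := by linear_combination (w + 1) * hw
  have i1 : q / w ^ 4 = q * (-w) := by rw [div_eq_iff (by positivity)]; linear_combination q * h5
  have i3 : q / w ^ 2 = q * (-w ^ 3) := by rw [div_eq_iff (by positivity)]; linear_combination q * h5
  rw [i1, i3]
  have t1 := ((((pA_tendsto hq (q * w ^ 2)).mul (pA_tendsto hq (q * (-w ^ 3)))).mul
    ((pA_tendsto hq (q * w ^ 4)).mul (pA_tendsto hq (q * (-w))))).mul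
    (pA_tendsto hq q))
  have t2 := (pA_tendsto (norm_pow_lt hq 5 (by norm_num)) (q ^ 5))
  refine tendsto_nhds_unique t1 (t2.congr fun N => ?_)
  simp only [← Finset.prod_mul_distrib]
  apply Finset.prod_congr rfl
  intro j _
  have : ∀ n, q ^ n * (q ^ n) ^ j = (q * q ^ j) ^ n := fun n => by rw [mul_pow, ← pow_mul, ← pow_mul, mul_comm j]
  rw [this]
  have hh : ∀ c, q * c * q ^ j = q * q ^ j * c := fun c => by ring
  rw [hh, hh, hh, hh]
  generalize q * q ^ j = t
  have : (1 - t * w ^ 2) * (1 - t * -w ^ 3) * ((1 - t * w ^ 4) * (1 - t * -w)) = 1 + t + t ^ 2 + t ^ 3 + t ^ 4 := by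
    have e1 : (1 - t * w ^ 4) * (1 - t * -w) = 1 + (w - w ^ 4) * t + t ^ 2 := by linear_combination - t ^ 2 * h5
    have e2 : (1 - t * w ^ 2) * (1 - t * -w ^ 3) = 1 + (w ^ 3 - w ^ 2) * t + t ^ 2 := by linear_combination - t ^ 2 * h5
    have e3 : (w - w ^ 4) * (w ^ 3 - w ^ 2) = -1 := by
      linear_combination hw + (w - w ^ 2) * h5
    rw [e1, e2]
    linear_combination -(t + t ^ 3) * hw + t ^ 2 * e3
  rw [this]
  ring

lemma aa_pair {t w : ℂ} (hw0 : w ≠ 0) (h1 : 1 - t * w ≠ 0) (h2 : 1 - t / w ≠ 0) :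
    t * w / (1 - t * w) ^ 2 + t / w / (1 - t / w) ^ 2 =
     ((w + w⁻¹) * t * (1 + t ^ 2) - 4 * t ^ 2) / (1 - (w + w⁻¹) * t + t ^ 2) ^ 2 := by
  have e : 1 - (w + w⁻¹) * t + t ^ 2 = (1 - t * w) * (1 - t / w) := by field_simp; ring
  rw [e]
  have h3 : w - t ≠ 0 := by
    intro h; apply h2; rw [← sub_eq_zero.1 h]; field_simp; ring
  field_simp
  ring

theorem lambert_prod {q : ℂ} (hq0 : q ≠ 0) (hq : ‖q‖ < 1) :
    Summable (fun j : ℕ => ff (q ^ (j + 1))) ∧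
    pA q q * pA (q ^ 2) (q ^ 2) ^ 2 * pA (q ^ 5) (q ^ 5) ^ 3 / pA (q ^ 10) (q ^ 10) ^ 2 =
      1 - ∑' j : ℕ, ff (q ^ (j + 1)) := by
  obtain ⟨w, hw, hwn⟩ : ∃ w : ℂ, w ^ 4 - w ^ 3 + w ^ 2 - w + 1 = 0 ∧ ‖w‖ = 1 := by
    have hp := Complex.isPrimitiveRoot_exp 10 (by norm_num)
    set w := Complex.exp (2 * Real.pi * Complex.I / (10 : ℕ)) with hwdef
    have h10 : w ^ 10 = 1 := hp.pow_eq_one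
    have h5 : w ^ 5 ≠ 1 := hp.pow_ne_one_of_pos_of_lt (by norm_num) (by norm_num)
    have h2 : w ^ 2 ≠ 1 := hp.pow_ne_one_of_pos_of_lt (by norm_num) (by norm_num)
    refine ⟨w, ?_, hp.norm'_eq_one (by norm_num)⟩
    have a : (w ^ 5 - 1) * ((w + 1) * (w ^ 4 - w ^ 3 + w ^ 2 - w + 1)) = 0 := by
      linear_combination h10
    rcases mul_eq_zero.1 a with a | a
    · exact absurd (sub_eq_zero.1 a) h5
    rcases mul_eq_zero.1 a with a | a
    · exact absurd (by linear_combination (w - 1) * a) h2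
    · exact a
  have hw0 : w ≠ 0 := by rw [← norm_ne_zero_iff, hwn]; norm_num
  have h5 : w ^ 5 = -1 := by linear_combination (w + 1) * hw
  have hw3n : ‖w ^ 3‖ = 1 := by rw [norm_pow, hwn, one_pow]
  have hw30 : w ^ 3 ≠ 0 := pow_ne_zero _ hw0
  have hw1 : w ≠ 1 := by rintro rfl; norm_num at hw
  have hw31 : w ^ 3 ≠ 1 := by
    intro h
    apply hw1
    have : w ^ 2 = -1 := by linear_combination h5 - w ^ 2 * h
    have : w = -1 := by linear_combination (-1 : ℂ) * h + w * this
    rw [this] at h; norm_num at h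
  have W := wp_diff hq0 hq hw0 hw30 (ne_one_aux hq hwn hw1) (ne_one_aux' hq hwn)
    (ne_one_aux hq hw3n hw31) (ne_one_aux' hq hw3n)
  have hTr : ∀ z, pT q z = (1 - z) * (pA q (q * z) * pA q (q / z)) := by
    intro z; unfold pT; rw [pA_rec hq z]; ring
  rw [show w * w ^ 3 = w ^ 4 by ring, show w / w ^ 3 = (w ^ 2)⁻¹ by field_simp, pT_inv hq (pow_ne_zero 2 hw0),
    hTr (w ^ 4), hTr (w ^ 2), hTr w, hTr (w ^ 3)] at W
  have m10 := M10 hq hw hw0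
  have m5 := M5 hq hw hw0
  have b1 := pA_ne' hq hq
  have b2 := pA_ne' (norm_pow_lt hq 2 (by norm_num)) (norm_pow_lt hq 2 (by norm_num))
  have b5 := pA_ne' (norm_pow_lt hq 5 (by norm_num)) (norm_pow_lt hq 5 (by norm_num))
  have b10 := pA_ne' (norm_pow_lt hq 10 (by norm_num)) (norm_pow_lt hq 10 (by norm_num))
  have s := fun z => (aa_summable hq z).of_norm
  have hz : ∀ z, ∑' j, aa q z j = z / (1 - z) ^ 2 + ∑' j, aa q (q * z) j := by
    intro z
    rw [(s z).tsum_eq_zero_add]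
    congr 1
    · simp [aa]
    · congr 1; ext j; simp only [aa, pow_succ]; ring_nf
  rw [hz w, hz (w ^ 3), add_assoc, add_assoc, ← (s _).tsum_add (s _), ← (s _).tsum_add (s _)] at W
  have hi1 : w⁻¹ = -w ^ 4 := by field_simp; linear_combination h5
  have hi3 : (w ^ 3)⁻¹ = -w ^ 2 := by field_simp; linear_combination h5
  set p : ℂ := w - w ^ 4 with hp
  set r : ℂ := w ^ 3 - w ^ 2 with hr
  have hpr : p + r = 1 := by rw [hp, hr]; linear_combination -hw
  have hprm : p * r = -1 := by rw [hp, hr]; linear_combination hw + (w - w ^ 2) * h5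
  have hκ0 : r - p ≠ 0 := by
    intro h
    have : (5 : ℂ) = 0 := by linear_combination (r - p) * h - (p + r + 1) * hpr + 4 * hprm
    norm_num at this
  have hterm : ∀ j, aa q (q * w) j + aa q (q / w) j - (aa q (q * w ^ 3) j + aa q (q / w ^ 3) j)
      = - (r - p) * ff (q ^ (j + 1)) := by
    intro j
    have n1 := ne_one_aux hq hwn hw1 (j + 1)
    have n2 := ne_one_aux' hq hwn j
    have n3 := ne_one_aux hq hw3n hw31 (j + 1)
    have n4 := ne_one_aux' hq hw3n j
    have n1' : 1 - q ^ (j + 1) * w ≠ 0 := fun h => n1 (by linear_combination -h)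
    have n2' : 1 - q ^ (j + 1) / w ≠ 0 := fun h => n2 (by
      rw [div_mul_eq_mul_div, ← pow_succ']; linear_combination -h)
    have n3' : 1 - q ^ (j + 1) * w ^ 3 ≠ 0 := fun h => n3 (by linear_combination -h)
    have n4' : 1 - q ^ (j + 1) / w ^ 3 ≠ 0 := fun h => n4 (by
      rw [div_mul_eq_mul_div, ← pow_succ']; linear_combination -h)
    have A1 := aa_pair (t := q ^ (j + 1)) hw0 n1' n2'
    have A3 := aa_pair (t := q ^ (j + 1)) hw30 n3' n4'
    have c1 : 1 - p * q ^ (j + 1) + (q ^ (j + 1)) ^ 2 ≠ 0 := by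
      have : 1 - p * q ^ (j + 1) + (q ^ (j + 1)) ^ 2 = (1 - q ^ (j + 1) * w) * (1 - q ^ (j + 1) / w) := by
        rw [div_eq_mul_inv, hi1, hp]; linear_combination (q ^ (j + 1)) ^ 2 * h5
      rw [this]; exact mul_ne_zero n1' n2'
    have c3 : 1 - r * q ^ (j + 1) + (q ^ (j + 1)) ^ 2 ≠ 0 := by
      have : 1 - r * q ^ (j + 1) + (q ^ (j + 1)) ^ 2 = (1 - q ^ (j + 1) * w ^ 3) * (1 - q ^ (j + 1) / w ^ 3) := by
        rw [div_eq_mul_inv, hi3, hr]; linear_combination (q ^ (j + 1)) ^ 2 * h5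
      rw [this]; exact mul_ne_zero n3' n4'
    rw [show w + w⁻¹ = p by rw [hi1, hp]; ring] at A1
    rw [show w ^ 3 + (w ^ 3)⁻¹ = r by rw [hi3, hr]; ring] at A3
    have e1 : ∀ z, q * z * q ^ j = q ^ (j + 1) * z := fun z => by ring
    have e2 : ∀ z, q / z * q ^ j = q ^ (j + 1) / z := fun z => by ring
    simp only [aa, e1, e2]
    rw [A1, A3]
    generalize q ^ (j + 1) = t at *
    have hden : 1 - t + t ^ 2 - t ^ 3 + t ^ 4 = (1 - p * t + t ^ 2) * (1 - r * t + t ^ 2) := by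
      linear_combination (t + t ^ 3) * hpr - t ^ 2 * hprm
    have hnum : t * ((1 + t ^ 2) ^ 3 - 7 * (1 + t ^ 2) * t ^ 2 + 4 * t ^ 3) =
        t * ((1 + t ^ 2) ^ 3 - (p * r + 8) * (1 + t ^ 2) * t ^ 2 + 4 * (p + r) * t ^ 3) := by
      rw [hpr, hprm]; ring
    unfold ff
    rw [hden, hnum]
    generalize hc1' : 1 - p * t + t ^ 2 = C1 at *
    generalize hc3' : 1 - r * t + t ^ 2 = C3 at *
    field_simp
    rw [← hc1', ← hc3']
    ring
  have hS : Summable (fun j : ℕ => ff (q ^ (j + 1))) := by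
    have := (((s (q * w)).add (s (q / w))).sub ((s (q * w ^ 3)).add (s (q / w ^ 3)))).mul_left (-(r - p))⁻¹
    refine this.congr fun j => ?_
    rw [hterm, inv_mul_cancel_left₀ (neg_ne_zero.2 hκ0)]
  refine ⟨hS, ?_⟩
  have hsub := ((s (q * w)).add (s (q / w))).tsum_sub ((s (q * w ^ 3)).add (s (q / w ^ 3)))
  simp only [hterm] at hsub
  rw [tsum_mul_left] at hsub
  set F := ∑' j : ℕ, ff (q ^ (j + 1)) with hF
  have u1 : 1 - w ≠ 0 := sub_ne_zero.2 hw1.symm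
  have u3 : 1 - w ^ 3 ≠ 0 := sub_ne_zero.2 hw31.symm
  have k1 : w / (1 - w) ^ 2 - w ^ 3 / (1 - w ^ 3) ^ 2 = r - p := by
    rw [div_sub_div _ _ (pow_ne_zero 2 u1) (pow_ne_zero 2 u3), div_eq_iff (by positivity), hp, hr]
    linear_combination ((2) * w ^ 1 + (1) * w ^ 2 + (-4) * w ^ 3 + (-3) * w ^ 4 + (2) * w ^ 5 + (3) * w ^ 6 + (-1) * w ^ 8) * hw
  have k2 : (1 - w) ^ 2 * (1 - w ^ 3) ^ 2 * (r - p) = w * (1 - w ^ 2) * (1 - w ^ 4) := by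
    rw [hp, hr]
    linear_combination ((-2) * w ^ 1 + (-1) * w ^ 2 + (4) * w ^ 3 + (3) * w ^ 4 + (-2) * w ^ 5 + (-3) * w ^ 6 + (1) * w ^ 8) * hw
  have hi2 : w ^ 3 * (w ^ 2)⁻¹ = w := by field_simp
  generalize ∑' j, (aa q (q * w) j + aa q (q / w) j) = S1 at *
  generalize ∑' j, (aa q (q * w ^ 3) j + aa q (q / w ^ 3) j) = S3 at *
  generalize pA q (q * w) * pA q (q / w) = Y1 at *
  generalize pA q (q * w ^ 3) * pA q (q / w ^ 3) = Y3 at *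
  generalize pA q (q * w ^ 2) * pA q (q / w ^ 2) = X2 at *
  generalize pA q (q * w ^ 4) * pA q (q / w ^ 4) = X4 at *
  generalize w / (1 - w) ^ 2 = x0 at *
  generalize w ^ 3 / (1 - w ^ 3) ^ 2 = y0 at *
  generalize pA q q = B1 at *
  generalize pA (q ^ 2) (q ^ 2) = B2 at *
  generalize pA (q ^ 5) (q ^ 5) = B5 at *
  generalize pA (q ^ 10) (q ^ 10) = B10 at *
  generalize (w ^ 2)⁻¹ = v at *
  have V : X2 * X4 * B1 ^ 4 = Y1 ^ 2 * Y3 ^ 2 * (1 - F) := by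
    have hne : (1 - w) ^ 2 * (1 - w ^ 3) ^ 2 * (r - p) ≠ 0 := by positivity
    apply mul_left_cancel₀ hne
    linear_combination (-1 : ℂ) * W + X2 * X4 * B1 ^ 4 * k2 - (1 - w ^ 4) * (1 - w ^ 2) * X4 * X2 * B1 ^ 4 * hi2
      + (1 - w) ^ 2 * (1 - w ^ 3) ^ 2 * Y1 ^ 2 * Y3 ^ 2 * (k1 - hsub)
  rw [div_eq_iff (pow_ne_zero 2 b10)]
  have hne : B1 ^ 2 ≠ 0 := pow_ne_zero 2 b1
  apply mul_left_cancel₀ hne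
  linear_combination B2 ^ 2 * B5 ^ 2 * V - B1 ^ 3 * B2 ^ 2 * B5 ^ 2 * m5 + (Y1 * Y3 * B2 * B5 + B1 * B10) * (1 - F) * m10

noncomputable def gg (a : ℕ) (z : ℂ) : ℂ := ∏' j : ℕ, (1 - z ^ (10 * j + a))

noncomputable def phi (a : ℕ) (t : ℂ) : ℂ :=
  t ^ a * (10 * (t ^ 10 / (1 - t ^ 10) ^ 2) + a * (1 - t ^ 10)⁻¹)

lemma gg_eq (a : ℕ) (z : ℂ) : gg a z = pA (z ^ 10) (z ^ a) := by
  unfold gg pA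
  congr 1; ext j; rw [← pow_mul, ← pow_add, add_comm a]

lemma gg_ne {a : ℕ} (ha : a ≠ 0) {z : ℂ} (hz : ‖z‖ < 1) : gg a z ≠ 0 := by
  rw [gg_eq]; exact pA_ne' (norm_pow_lt hz 10 (by norm_num)) (norm_pow_lt hz a ha)

lemma phi_hasSum (a : ℕ) {t : ℂ} (ht : ‖t‖ < 1) :
    HasSum (fun j : ℕ => ((10 * j + a : ℕ) : ℂ) * t ^ (10 * j + a)) (phi a t) := by
  have hT := norm_pow_lt ht 10 (by norm_num)
  have h1 := (hasSum_coe_mul_geometric_of_norm_lt_one hT).mul_left 10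
  have h2 := (hasSum_geometric_of_norm_lt_one hT).mul_left (a : ℂ)
  have h3 := (h1.add h2).mul_left (t ^ a)
  unfold phi
  have e : (fun j : ℕ => ((10 * j + a : ℕ) : ℂ) * t ^ (10 * j + a)) =
      fun i : ℕ => t ^ a * (10 * ((i : ℂ) * (t ^ 10) ^ i) + (a : ℂ) * (t ^ 10) ^ i) := by
    ext j
    push_cast
    rw [pow_add, pow_mul]
    ring
  rw [e]
  exact h3

lemma lam_hasSum {a : ℕ} (ha : a ≠ 0) {z : ℂ} (hz : ‖z‖ < 1) :
    ∃ S : ℂ, HasSum (fun m : ℕ => phi a (z ^ (m + 1))) S ∧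
      HasSum (fun j : ℕ => ((10 * j + a : ℕ) : ℂ) * (z ^ (10 * j + a) / (1 - z ^ (10 * j + a)))) S := by
  have hs : Summable (fun p : ℕ × ℕ => ((10 * p.1 + a : ℕ) : ℂ) * (z ^ (10 * p.1 + a)) ^ (p.2 + 1)) := by
    have s1 : Summable (fun j : ℕ => ((10 * j + a : ℕ) : ℝ) * ‖z‖ ^ (10 * j + a)) := by
      have := (phi_hasSum a (t := (‖z‖ : ℂ)) (by simpa using hz)).summable
      exact_mod_cast this
    have s2 := summable_geometric_of_lt_one (norm_nonneg z) hz
    have s3 := s1.mul_of_nonneg s2 (fun _ => by positivity) (fun _ => by positivity)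
    refine Summable.of_norm_bounded s3 ?_
    rintro ⟨j, m⟩
    simp only [norm_mul, norm_pow, Complex.norm_natCast]
    rw [mul_assoc, ← pow_mul, ← pow_add]
    apply mul_le_mul_of_nonneg_left _ (by positivity)
    apply pow_le_pow_of_le_one (norm_nonneg _) hz.le
    have : 1 ≤ 10 * j + a := by omega
    nlinarith
  obtain ⟨S, hS⟩ := hs
  refine ⟨S, ?_, ?_⟩
  · have hS' := (Equiv.prodComm ℕ ℕ).hasSum_iff.2 hS
    refine hS'.prod_fiberwise fun m => ?_
    have := phi_hasSum a (norm_pow_lt hz (m + 1) (by omega))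
    convert this using 2 with j
    simp only [Function.comp, Equiv.prodComm_apply, Prod.fst_swap, Prod.snd_swap]
    rw [← pow_mul, ← pow_mul, mul_comm (m + 1)]
  · refine hS.prod_fiberwise fun j => ?_
    have := ((hasSum_geometric_of_norm_lt_one (norm_pow_lt hz (10 * j + a) (by omega))).mul_left
      (z ^ (10 * j + a))).mul_left ((10 * j + a : ℕ) : ℂ)
    simp only [← pow_succ'] at this
    exact this

lemma gg_lu {a : ℕ} : 
    MultipliableLocallyUniformlyOn (fun (n : ℕ) (q : ℂ) ↦ 1 - q ^ (10 * n + a)) (Metric.ball (0 : ℂ) 1) := by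
  use fun q ↦ ∏' n : ℕ, (1 - q ^ (10 * n + a))
  simp_rw [sub_eq_add_neg]
  apply hasProdLocallyUniformlyOn_of_forall_compact Metric.isOpen_ball
  intro K hK hcK
  rcases K.eq_empty_or_nonempty with hN | hN
  · simpa [hasProdUniformlyOn_iff_tendstoUniformlyOn, hN] using tendstoUniformlyOn_empty
  · obtain ⟨q₀, hq₀, _, HB⟩ := hcK.exists_sSup_image_eq_and_ge hN
      (show ContinuousOn (fun q : ℂ ↦ ‖q‖) K by fun_prop)
    have h1 : ‖q₀‖ < 1 := by simpa using hK hq₀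
    refine (summable_geometric_of_lt_one (norm_nonneg _) h1).hasProdUniformlyOn_nat_one_add
      hcK (.of_forall fun n x hx ↦ ?_) (fun _ ↦ by fun_prop)
    rw [norm_neg, norm_pow]
    exact (pow_le_pow_left₀ (norm_nonneg _) (HB x hx) _).trans
      (pow_le_pow_of_le_one (norm_nonneg _) h1.le (by omega))

lemma gg_deriv {a : ℕ} (ha : a ≠ 0) {z : ℂ} (hz0 : z ≠ 0) (hz : ‖z‖ < 1) :
    Summable (fun m : ℕ => phi a (z ^ (m + 1))) ∧
    DifferentiableAt ℂ (gg a) z ∧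
    z * logDeriv (gg a) z = - ∑' m : ℕ, phi a (z ^ (m + 1)) := by
  obtain ⟨S, h1, h2⟩ := lam_hasSum ha hz
  have hb : z ∈ Metric.ball (0 : ℂ) 1 := by simpa using hz
  have hd : DifferentiableOn ℂ (gg a) (Metric.ball 0 1) :=
    gg_lu.hasProdLocallyUniformlyOn.differentiableOn
    (.of_forall fun _ ↦ by simpa [Finset.prod_fn] using
      DifferentiableOn.finsetProd (fun _ _ ↦ by fun_prop)) Metric.isOpen_ball
  refine ⟨h1.summable, hd.differentiableAt (Metric.isOpen_ball.mem_nhds hb), ?_⟩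
  have hl : ∀ j : ℕ, logDeriv (fun w : ℂ => 1 - w ^ (10 * j + a)) z = 
      - z⁻¹ * (((10 * j + a : ℕ) : ℂ) * (z ^ (10 * j + a) / (1 - z ^ (10 * j + a)))) := by
    intro j
    have : HasDerivAt (fun w : ℂ => 1 - w ^ (10 * j + a)) (-(((10 * j + a : ℕ) : ℂ) * z ^ (10 * j + a - 1))) z :=
      (hasDerivAt_pow _ z).const_sub 1
    rw [logDeriv_apply, this.deriv]
    obtain ⟨n, hn⟩ : ∃ n, 10 * j + a = n + 1 := ⟨10 * j + a - 1, by omega⟩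
    rw [hn, Nat.add_sub_cancel, pow_succ z n]
    field_simp
  have hh := h2.mul_left (-z⁻¹)
  have := logDeriv_tprod_eq_tsum (f := fun (j : ℕ) (w : ℂ) => 1 - w ^ (10 * j + a)) Metric.isOpen_ball hb
    (fun j h => by
      have := norm_pow_lt hz (10 * j + a) (by omega)
      rw [← sub_eq_zero.1 h] at this; simp at this)
    (fun i => by fun_prop) (by simp only [hl]; exact hh.summable) gg_lu (gg_ne ha hz)
  simp only [hl] at this
  rw [hh.tsum_eq] at this
  rw [h1.tsum_eq]
  unfold gg
  rw [this]
  field_simp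

lemma phi_ff {t : ℂ} (ht : ‖t‖ < 1) : phi 1 t + phi 2 t + phi 8 t + phi 9 t
    - (phi 3 t + phi 4 t + phi 6 t + phi 7 t) = ff t := by
  have h10 : 1 - t ^ 10 ≠ 0 := fun h => by
    have := norm_pow_lt ht 10 (by norm_num)
    rw [← sub_eq_zero.1 h] at this; simp at this
  have e : 1 - t ^ 10 = (1 - t + t ^ 2 - t ^ 3 + t ^ 4) * ((1 + t) * (1 - t ^ 5)) := by ring
  have h1 : 1 - t + t ^ 2 - t ^ 3 + t ^ 4 ≠ 0 := fun h => h10 (by rw [e, h, zero_mul])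
  have h2 : (1 + t) * (1 - t ^ 5) ≠ 0 := fun h => h10 (by rw [e, h, mul_zero])
  unfold phi ff
  rw [div_eq_mul_inv _ ((1 - t + t ^ 2 - t ^ 3 + t ^ 4) ^ 2),
    show ((1 - t + t ^ 2 - t ^ 3 + t ^ 4) ^ 2)⁻¹ = ((1 + t) * (1 - t ^ 5)) ^ 2 / (1 - t ^ 10) ^ 2 by
      rw [e, mul_pow _ ((1 + t) * (1 - t ^ 5)), div_mul_cancel_right₀ (pow_ne_zero 2 h2)]]
  push_cast
  field_simp
  ring

noncomputable def KK (z : ℂ) : ℂ := z * ((gg 1 z * gg 2 z * gg 8 z * gg 9 z) / (gg 3 z * gg 4 z * gg 6 z * gg 7 z))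

lemma KK_ne {z : ℂ} (hz0 : z ≠ 0) (hz : ‖z‖ < 1) : KK z ≠ 0 := by
  have n : ∀ a, a ≠ 0 → gg a z ≠ 0 := fun a ha => gg_ne ha hz
  have := n 1 (by norm_num)
  have := n 2 (by norm_num)
  have := n 3 (by norm_num)
  have := n 4 (by norm_num)
  have := n 6 (by norm_num)
  have := n 7 (by norm_num)
  have := n 8 (by norm_num)
  have := n 9 (by norm_num)
  unfold KK
  positivity

lemma KK_deriv {z : ℂ} (hz0 : z ≠ 0) (hz : ‖z‖ < 1) :
    HasDerivAt KK (KK z / z * (pA z z * pA (z ^ 2) (z ^ 2) ^ 2 * pA (z ^ 5) (z ^ 5) ^ 3 / pA (z ^ 10) (z ^ 10) ^ 2)) z := by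
  have n : ∀ a, a ≠ 0 → gg a z ≠ 0 := fun a ha => gg_ne ha hz
  have n1 := n 1 (by norm_num)
  have n2 := n 2 (by norm_num)
  have n3 := n 3 (by norm_num)
  have n4 := n 4 (by norm_num)
  have n6 := n 6 (by norm_num)
  have n7 := n 7 (by norm_num)
  have n8 := n 8 (by norm_num)
  have n9 := n 9 (by norm_num)
  obtain ⟨s1, d1, l1⟩ := gg_deriv (a := 1) (by norm_num) hz0 hz
  obtain ⟨s2, d2, l2⟩ := gg_deriv (a := 2) (by norm_num) hz0 hz
  obtain ⟨s3, d3, l3⟩ := gg_deriv (a := 3) (by norm_num) hz0 hz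
  obtain ⟨s4, d4, l4⟩ := gg_deriv (a := 4) (by norm_num) hz0 hz
  obtain ⟨s6, d6, l6⟩ := gg_deriv (a := 6) (by norm_num) hz0 hz
  obtain ⟨s7, d7, l7⟩ := gg_deriv (a := 7) (by norm_num) hz0 hz
  obtain ⟨s8, d8, l8⟩ := gg_deriv (a := 8) (by norm_num) hz0 hz
  obtain ⟨s9, d9, l9⟩ := gg_deriv (a := 9) (by norm_num) hz0 hz
  rw [(lambert_prod hz0 hz).2]
  have hF := ((((s1.hasSum.add s2.hasSum).add s8.hasSum).add s9.hasSum).sub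
      (((s3.hasSum.add s4.hasSum).add s6.hasSum).add s7.hasSum)).tsum_eq
  simp only [phi_ff (norm_pow_lt hz (_ + 1) (Nat.succ_ne_zero _))] at hF
  have D := (hasDerivAt_id z).mul ((((d1.hasDerivAt.mul d2.hasDerivAt).mul d8.hasDerivAt).mul d9.hasDerivAt).div
    (((d3.hasDerivAt.mul d4.hasDerivAt).mul d6.hasDerivAt).mul d7.hasDerivAt) (by simp only [Pi.mul_apply]; positivity))
  refine HasDerivAt.congr_deriv (f := KK) D ?_
  rw [hF]
  simp only [logDeriv_apply] at l1 l2 l3 l4 l6 l7 l8 l9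
  generalize (∑' m : ℕ, phi 1 (z ^ (m + 1))) = T1 at *
  generalize (∑' m : ℕ, phi 2 (z ^ (m + 1))) = T2 at *
  generalize (∑' m : ℕ, phi 3 (z ^ (m + 1))) = T3 at *
  generalize (∑' m : ℕ, phi 4 (z ^ (m + 1))) = T4 at *
  generalize (∑' m : ℕ, phi 6 (z ^ (m + 1))) = T6 at *
  generalize (∑' m : ℕ, phi 7 (z ^ (m + 1))) = T7 at *
  generalize (∑' m : ℕ, phi 8 (z ^ (m + 1))) = T8 at *
  generalize (∑' m : ℕ, phi 9 (z ^ (m + 1))) = T9 at *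
  have key : ∀ {g d T : ℂ}, g ≠ 0 → z * (d / g) = -T → d = - T * g / z := by
    intro g d T hg h
    field_simp at h ⊢
    linear_combination h
  rw [key n1 l1, key n2 l2, key n3 l3, key n4 l4, key n6 l6, key n7 l7, key n8 l8, key n9 l9]
  simp only [Pi.mul_apply, Pi.div_apply, id, KK]
  field_simp
  ring

lemma partA {q : ℂ} (hq0 : q ≠ 0) (hq : ‖q‖ < 1) :
    (1 - KK q ^ 2) / KK q = pA (q ^ 2) (q ^ 2) * pA (q ^ 5) (q ^ 5) ^ 5 / (q * pA q q * pA (q ^ 10) (q ^ 10) ^ 5) := by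
  have hQ := norm_pow_lt hq 10 (by norm_num)
  have hQ0 : q ^ 10 ≠ 0 := pow_ne_zero _ hq0
  have W := pT_weier hQ0 hQ (x := q⁻¹) (y := q ^ 5) (u := q ^ 3) (v := 1) (inv_ne_zero hq0)
    (pow_ne_zero _ hq0) (pow_ne_zero _ hq0) one_ne_zero
  have tg : ∀ a b, a + b = 10 → pT (q ^ 10) (q ^ a) = gg a q * gg b q := by
    intro a b h
    unfold pT
    rw [gg_eq, gg_eq, ← h, pow_add, mul_div_cancel_left₀ _ (pow_ne_zero _ hq0)]
  have ti : ∀ a b, a + b = 10 → pT (q ^ 10) (q ^ a)⁻¹ = - (q ^ a)⁻¹ * (gg a q * gg b q) := by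
    intro a b h
    rw [pT_inv hQ (pow_ne_zero _ hq0), tg a b h]
  rw [mul_one, mul_one, mul_one, div_one, div_one, div_one,
    show q⁻¹ * q ^ 5 = q ^ 4 by field_simp, show q⁻¹ / q ^ 5 = (q ^ 6)⁻¹ by field_simp,
    show q⁻¹ * q ^ 3 = q ^ 2 by field_simp, show q⁻¹ / q ^ 3 = (q ^ 4)⁻¹ by field_simp,
    show q ^ 5 * q ^ 3 = q ^ 8 by ring, show q ^ 5 / q ^ 3 = q ^ 2 by field_simp,
    show pT (q ^ 10) q⁻¹ = pT (q ^ 10) (q ^ 1)⁻¹ by rw [pow_one],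
    ti 6 4 rfl, ti 4 6 rfl, ti 1 9 rfl, tg 4 6 rfl, tg 3 7 rfl, tg 2 8 rfl, tg 5 5 rfl, tg 8 2 rfl] at W
  have n : ∀ a, a ≠ 0 → gg a q ≠ 0 := fun a ha => gg_ne ha hq
  have n1 := n 1 (by norm_num)
  have n2 := n 2 (by norm_num)
  have n3 := n 3 (by norm_num)
  have n4 := n 4 (by norm_num)
  have n5 := n 5 (by norm_num)
  have n6 := n 6 (by norm_num)
  have n7 := n 7 (by norm_num)
  have n8 := n 8 (by norm_num)
  have n9 := n 9 (by norm_num)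
  have b2 := pA_ne' (norm_pow_lt hq 2 (by norm_num)) (norm_pow_lt hq 2 (by norm_num))
  have b10 := pA_ne' hQ hQ
  have e5 : pA (q ^ 5) (q ^ 5) = gg 5 q * pA (q ^ 10) (q ^ 10) := by
    rw [pA_split2 (norm_pow_lt hq 5 (by norm_num)), gg_eq, ← pow_mul, ← pow_add]
  have e1 : pA q q = gg 1 q * gg 3 q * gg 5 q * gg 7 q * gg 9 q * pA (q ^ 2) (q ^ 2) := by
    rw [pA_split2 hq, pA_split5 (norm_pow_lt hq 2 (by norm_num)) q]
    simp only [gg_eq, ← pow_mul, pow_one, ← pow_succ', ← pow_two]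
    norm_num
  rw [e5, e1]
  unfold KK
  generalize gg 1 q = g1 at *
  generalize gg 2 q = g2 at *
  generalize gg 3 q = g3 at *
  generalize gg 4 q = g4 at *
  generalize gg 5 q = g5 at *
  generalize gg 6 q = g6 at *
  generalize gg 7 q = g7 at *
  generalize gg 8 q = g8 at *
  generalize gg 9 q = g9 at *
  field_simp at W ⊢
  linear_combination (-1 : ℂ) * W

lemma final_cplx {q : ℂ} (hq0 : q ≠ 0) (hq : ‖q‖ < 1) :
    HasDerivAt (fun z => -((1 + KK z ^ 2) / KK z)) 
     (pA (q ^ 2) (q ^ 2) ^ 3 * pA (q ^ 5) (q ^ 5) ^ 8 / (q ^ 2 * pA (q ^ 10) (q ^ 10) ^ 7)) q := by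
  have hk := KK_ne hq0 hq
  have hd := KK_deriv hq0 hq
  have D := (((hd.pow 2).const_add 1).div hd hk).neg
  refine HasDerivAt.congr_deriv D ?_
  have A := partA hq0 hq
  have b1 := pA_ne' hq hq
  have b10 := pA_ne' (norm_pow_lt hq 10 (by norm_num)) (norm_pow_lt hq 10 (by norm_num))
  have e : pA (q ^ 2) (q ^ 2) ^ 3 * pA (q ^ 5) (q ^ 5) ^ 8 / (q ^ 2 * pA (q ^ 10) (q ^ 10) ^ 7) =
    (1 - KK q ^ 2) / KK q * (1 / q * (pA q q * pA (q ^ 2) (q ^ 2) ^ 2 * pA (q ^ 5) (q ^ 5) ^ 3 / pA (q ^ 10) (q ^ 10) ^ 2)) := by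
    rw [A]; field_simp
  rw [e]
  simp only [Pi.pow_apply]
  field_simp
  ring

lemma gg_real (a : ℕ) {x : ℝ} (hx0 : 0 < x) (hx1 : x < 1) :
    ∃ G : ℝ, (G : ℂ) = gg a (x : ℂ) ∧ HasProd (fun j : ℕ => 1 - x ^ (10 * j + a)) G := by
  have hm : Multipliable (fun j : ℕ => 1 - x ^ (10 * j + a)) := by
    simp only [sub_eq_add_neg]
    apply multipliable_one_add_of_summable
    simp only [norm_neg, norm_pow, Real.norm_of_nonneg hx0.le]
    simp only [pow_add, pow_mul]
    exact (summable_geometric_of_lt_one (r := x ^ 10) (by positivity) (pow_lt_one₀ hx0.le hx1 (by norm_num))).mul_right _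
  refine ⟨_, ?_, hm.hasProd⟩
  have := hm.hasProd.map Complex.ofRealHom Complex.continuous_ofReal
  unfold gg
  have h2 := this.tprod_eq
  simp only [Function.comp_def, Complex.ofRealHom_eq_coe, Complex.ofReal_sub, Complex.ofReal_one, Complex.ofReal_pow] at h2
  exact h2.symm

lemma euler_cplx {x : ℝ} (hx0 : 0 < x) (hx1 : x < 1) : (eulerE x : ℂ) = pA (x : ℂ) (x : ℂ) := by
  have hm : Multipliable (fun j : ℕ => 1 - x ^ (j + 1)) := by
    simp only [sub_eq_add_neg]
    apply multipliable_one_add_of_summable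
    simp only [norm_neg, norm_pow, Real.norm_of_nonneg hx0.le]
    simp only [pow_succ]
    exact (summable_geometric_of_lt_one hx0.le hx1).mul_right _
  have := (hm.hasProd.map Complex.ofRealHom Complex.continuous_ofReal).tprod_eq
  unfold pA eulerE
  simp only [Function.comp_def, Complex.ofRealHom_eq_coe, Complex.ofReal_sub, Complex.ofReal_one, Complex.ofReal_pow] at this
  rw [← this]
  congr 1; ext j; rw [pow_succ']

lemma ramK_cplx {x : ℝ} (hx0 : 0 < x) (hx1 : x < 1) : (ramK x : ℂ) = KK (x : ℂ) := by
  obtain ⟨G1, c1, h1⟩ := gg_real 1 hx0 hx1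
  obtain ⟨G2, c2, h2⟩ := gg_real 2 hx0 hx1
  obtain ⟨G3, c3, h3⟩ := gg_real 3 hx0 hx1
  obtain ⟨G4, c4, h4⟩ := gg_real 4 hx0 hx1
  obtain ⟨G6, c6, h6⟩ := gg_real 6 hx0 hx1
  obtain ⟨G7, c7, h7⟩ := gg_real 7 hx0 hx1
  obtain ⟨G8, c8, h8⟩ := gg_real 8 hx0 hx1
  obtain ⟨G9, c9, h9⟩ := gg_real 9 hx0 hx1
  have hx : ‖(x : ℂ)‖ < 1 := by rw [Complex.norm_real, Real.norm_of_nonneg hx0.le]; exact hx1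
  have n3 : G3 ≠ 0 := by have := gg_ne (a := 3) (by norm_num) hx; rw [← c3] at this; exact_mod_cast this
  have n4 : G4 ≠ 0 := by have := gg_ne (a := 4) (by norm_num) hx; rw [← c4] at this; exact_mod_cast this
  have n6 : G6 ≠ 0 := by have := gg_ne (a := 6) (by norm_num) hx; rw [← c6] at this; exact_mod_cast this
  have n7 : G7 ≠ 0 := by have := gg_ne (a := 7) (by norm_num) hx; rw [← c7] at this; exact_mod_cast this
  have H := (((h1.mul h2).mul h8).mul h9).div₀ (((h3.mul h4).mul h6).mul h7) (by positivity)
  unfold ramK KK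
  rw [H.tprod_eq, ← c1, ← c2, ← c3, ← c4, ← c6, ← c7, ← c8, ← c9]
  push_cast
  rfl

theorem stmt_14 (q : ℝ) (hq0 : 0 < q) (hq1 : q < 1) :
    HasDerivAt (fun x : ℝ => -((1 + ramK x ^ 2) / ramK x))
      (eulerE (q ^ 2) ^ 3 * eulerE (q ^ 5) ^ 8 / (q ^ 2 * eulerE (q ^ 10) ^ 7)) q := by
  have hx : ‖(q : ℂ)‖ < 1 := by rw [Complex.norm_real, Real.norm_of_nonneg hq0.le]; exact hq1
  have h0 : (q : ℂ) ≠ 0 := by exact_mod_cast hq0.ne'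
  have D := (final_cplx h0 hx).real_of_complex
  have E : ∀ n : ℕ, n ≠ 0 → pA ((q : ℂ) ^ n) ((q : ℂ) ^ n) = (eulerE (q ^ n) : ℂ) := by
    intro n hn
    rw [euler_cplx (by positivity) (pow_lt_one₀ hq0.le hq1 hn)]
    push_cast; rfl
  rw [E 2 (by norm_num), E 5 (by norm_num), E 10 (by norm_num)] at D
  refine (D.congr_of_eventuallyEq ?_).congr_deriv ?_
  · filter_upwards [isOpen_Ioo.mem_nhds (show q ∈ Set.Ioo 0 1 from ⟨hq0, hq1⟩)] with x hx
    rw [← ramK_cplx hx.1 hx.2]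
    norm_cast
  · norm_cast
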